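/- There exists a constant L > 0, independent of y, such that for every y ∈ Y the map W ↦ ∇_W ℓ2(y,W) = (W h*(y,W) + r*(y,W) − y) h*(y,W)^T is L-Lipschitz on C with respect to the Frobenius norm, i.e., ‖∇_W ℓ2(y,W₁) − ∇_W ℓ2(y,W₂)‖_F ≤ L ‖W₁ − W₂‖_F for all W₁, W₂ ∈ C. -/

import Mathlib

open scoped RealInnerProductSpace ENNReal

noncomputable section

/-- `ℝ^d` with the Euclidean norm. -/
abbrev Vec (d : ℕ) := EuclideanSpace ℝ (Fin d)

/-- `ℝ^{d×k}` with the Frobenius (Euclidean) norm, viewed as a Euclidean space. -/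
abbrev Mat (d k : ℕ) := EuclideanSpace ℝ (Fin d × Fin k)

/-- Matrix-vector product `W h`. -/
def matMulVec {d k : ℕ} (W : Mat d k) (h : Vec k) : Vec d :=
  (WithLp.equiv 2 (Fin d → ℝ)).symm (fun i => ∑ j, W (i, j) * h j)

/-- The function `ℓ̃₂(y, W, h, r) = (1/2)‖y − Wh − r‖² + φ(h) + ϕ(r)`, with values in `[0,∞]`. -/
def ell2t {d k : ℕ} (φ : Vec k → ℝ≥0∞) (ϕ' : Vec d → ℝ≥0∞)
    (y : Vec d) (W : Mat d k) (h : Vec k) (r : Vec d) : ℝ≥0∞ :=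
  ENNReal.ofReal (‖y - matMulVec W h - r‖ ^ 2 / 2) + φ h + ϕ' r

/-- Convexity for functions with values in `[0,∞]`. -/
def ConvexFnENN {E : Type*} [AddCommMonoid E] [Module ℝ E] (γ : E → ℝ≥0∞) : Prop :=
  ∀ x y : E, ∀ a b : ℝ, 0 ≤ a → 0 ≤ b → a + b = 1 →
    γ (a • x + b • y) ≤ ENNReal.ofReal a * γ x + ENNReal.ofReal b * γ y

/-- The matrix `(W h + r − y) hᵀ`, the claimed gradient of `ℓ₂(y, ·)` at `W`
    (with `h = h*(y,W)`, `r = r*(y,W)`). -/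
def gradFormula {d k : ℕ} (y : Vec d) (W : Mat d k) (h : Vec k) (r : Vec d) : Mat d k :=
  (WithLp.equiv 2 (Fin d × Fin k → ℝ)).symm
    (fun p => (matMulVec W h + r - y) p.1 * h p.2)

lemma matMulVec_apply {d k : ℕ} (W : Mat d k) (h : Vec k) (i : Fin d) :
    matMulVec W h i = ∑ j, W (i, j) * h j := rfl

lemma gradFormula_apply {d k : ℕ} (y : Vec d) (W : Mat d k) (h : Vec k) (r : Vec d)
    (p : Fin d × Fin k) :
    gradFormula y W h r p = (matMulVec W h + r - y) p.1 * h p.2 := rfl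

lemma matMulVec_sub_left {d k : ℕ} (W V : Mat d k) (h : Vec k) :
    matMulVec (W - V) h = matMulVec W h - matMulVec V h := by
  ext i
  simp [matMulVec_apply, sub_mul, Finset.sum_sub_distrib]

lemma matMulVec_sub_right {d k : ℕ} (W : Mat d k) (h g : Vec k) :
    matMulVec W (h - g) = matMulVec W h - matMulVec W g := by
  ext i
  simp [matMulVec_apply, mul_sub, Finset.sum_sub_distrib]

lemma norm_matMulVec_le {d k : ℕ} (W : Mat d k) (h : Vec k) :
    ‖matMulVec W h‖ ≤ ‖W‖ * ‖h‖ := by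
  apply le_of_sq_le_sq _ (by positivity)
  rw [mul_pow, EuclideanSpace.real_norm_sq_eq, EuclideanSpace.real_norm_sq_eq,
    EuclideanSpace.real_norm_sq_eq, Fintype.sum_prod_type, Finset.sum_mul]
  apply Finset.sum_le_sum
  intro i _
  rw [matMulVec_apply]
  exact Finset.sum_mul_sq_le_sq_mul_sq _ _ _

/-- outer product -/
def outerP {d k : ℕ} (e : Vec d) (h : Vec k) : Mat d k :=
  (WithLp.equiv 2 (Fin d × Fin k → ℝ)).symm (fun p => e p.1 * h p.2)

lemma outerP_apply {d k : ℕ} (e : Vec d) (h : Vec k) (p : Fin d × Fin k) :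
    outerP e h p = e p.1 * h p.2 := rfl

lemma norm_outerP {d k : ℕ} (e : Vec d) (h : Vec k) : ‖outerP e h‖ ≤ ‖e‖ * ‖h‖ := by
  apply le_of_sq_le_sq _ (by positivity)
  rw [mul_pow, EuclideanSpace.real_norm_sq_eq, EuclideanSpace.real_norm_sq_eq,
    EuclideanSpace.real_norm_sq_eq, Fintype.sum_prod_type, Finset.sum_mul_sum]
  simp [outerP_apply, mul_pow]

lemma outerP_diff {d k : ℕ} (e₁ e₂ : Vec d) (h₁ h₂ : Vec k) :
    outerP e₁ h₁ - outerP e₂ h₂ = outerP (e₁ - e₂) h₁ + outerP e₂ (h₁ - h₂) := by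
  ext p
  simp [outerP_apply]
  ring

lemma g_bound {d k : ℕ} (B : ℝ) (hB : 1 ≤ B) (y : Vec d) (W₁ W₂ : Mat d k) (h₁ h₂ : Vec k)
    (r₁ r₂ : Vec d) (hy : ‖y‖ ≤ B) (hW₁ : ‖W₁‖ ≤ B) (hW₂ : ‖W₂‖ ≤ B) (hh₁ : ‖h₁‖ ≤ B)
    (hh₂ : ‖h₂‖ ≤ B) (hr₁ : ‖r₁‖ ≤ B) :
    (‖y - matMulVec W₁ h₂ - r₂‖ ^ 2 / 2 - ‖y - matMulVec W₂ h₂ - r₂‖ ^ 2 / 2)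
      - (‖y - matMulVec W₁ h₁ - r₁‖ ^ 2 / 2 - ‖y - matMulVec W₂ h₁ - r₁‖ ^ 2 / 2)
      ≤ 4 * B ^ 2 * ‖W₁ - W₂‖ * (‖h₁ - h₂‖ + ‖r₁ - r₂‖) := by
  have key : ∀ u v : Vec d, ‖u‖ ^ 2 / 2 - ‖v‖ ^ 2 / 2 = ⟪u - v, u + v⟫ / 2 := by
    intro u v
    rw [inner_sub_left, inner_add_right, inner_add_right, real_inner_self_eq_norm_sq,
      real_inner_self_eq_norm_sq, real_inner_comm u v]
    ring
  rw [key, key]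
  set a₁ := matMulVec (W₁ - W₂) h₁ with ha₁
  set a₂ := matMulVec (W₁ - W₂) h₂ with ha₂
  set b₁ := (y - matMulVec W₁ h₁ - r₁) + (y - matMulVec W₂ h₁ - r₁) with hb₁
  set b₂ := (y - matMulVec W₁ h₂ - r₂) + (y - matMulVec W₂ h₂ - r₂) with hb₂
  have e1 : (y - matMulVec W₁ h₁ - r₁) - (y - matMulVec W₂ h₁ - r₁) = -a₁ := by
    rw [ha₁, matMulVec_sub_left]; abel
  have e2 : (y - matMulVec W₁ h₂ - r₂) - (y - matMulVec W₂ h₂ - r₂) = -a₂ := by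
    rw [ha₂, matMulVec_sub_left]; abel
  rw [e1, e2, inner_neg_left, inner_neg_left]
  have e3 : -⟪a₂, b₂⟫ / 2 - -⟪a₁, b₁⟫ / 2 = (⟪a₁ - a₂, b₁⟫ + ⟪a₂, b₁ - b₂⟫) / 2 := by
    rw [inner_sub_left, inner_sub_right]; ring
  rw [e3]
  have hu := norm_nonneg (W₁ - W₂)
  have hp := norm_nonneg (h₁ - h₂)
  have hq := norm_nonneg (r₁ - r₂)
  have n1 : ‖a₁ - a₂‖ ≤ ‖W₁ - W₂‖ * ‖h₁ - h₂‖ := by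
    rw [ha₁, ha₂, ← matMulVec_sub_right]; exact norm_matMulVec_le _ _
  have n2 : ‖a₂‖ ≤ ‖W₁ - W₂‖ * B :=
    (norm_matMulVec_le _ _).trans (by gcongr)
  have mb : ∀ W : Mat d k, ‖W‖ ≤ B → ‖y - matMulVec W h₁ - r₁‖ ≤ B + B * B + B := by
    intro W hW
    have m1 : ‖matMulVec W h₁‖ ≤ B * B := (norm_matMulVec_le _ _).trans (by gcongr)
    have m2 := norm_sub_le (y - matMulVec W h₁) r₁
    have m3 := norm_sub_le y (matMulVec W h₁)
    linarith
  have n3 : ‖b₁‖ ≤ 4 * B + 2 * B ^ 2 := by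
    have := norm_add_le (y - matMulVec W₁ h₁ - r₁) (y - matMulVec W₂ h₁ - r₁)
    have := mb W₁ hW₁
    have := mb W₂ hW₂
    rw [hb₁]
    linarith
  have n4 : ‖b₁ - b₂‖ ≤ 2 * B * ‖h₁ - h₂‖ + 2 * ‖r₁ - r₂‖ := by
    have e : b₁ - b₂ = -((matMulVec W₁ (h₁ - h₂) + (r₁ - r₂)) +
        (matMulVec W₂ (h₁ - h₂) + (r₁ - r₂))) := by
      rw [hb₁, hb₂, matMulVec_sub_right, matMulVec_sub_right]; abel
    rw [e, norm_neg]
    have m : ∀ W : Mat d k, ‖W‖ ≤ B → ‖matMulVec W (h₁ - h₂) + (r₁ - r₂)‖ ≤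
        B * ‖h₁ - h₂‖ + ‖r₁ - r₂‖ := by
      intro W hW
      refine (norm_add_le _ _).trans ?_
      gcongr
      exact (norm_matMulVec_le _ _).trans (by gcongr)
    refine (norm_add_le _ _).trans ?_
    have := m W₁ hW₁
    have := m W₂ hW₂
    linarith
  have i1 : ⟪a₁ - a₂, b₁⟫ ≤ (‖W₁ - W₂‖ * ‖h₁ - h₂‖) * (4 * B + 2 * B ^ 2) :=
    (real_inner_le_norm _ _).trans (by gcongr)
  have i2 : ⟪a₂, b₁ - b₂⟫ ≤ (‖W₁ - W₂‖ * B) * (2 * B * ‖h₁ - h₂‖ + 2 * ‖r₁ - r₂‖) :=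
    (real_inner_le_norm _ _).trans (by gcongr)
  have hBB : B ≤ B ^ 2 := by nlinarith
  have j1 : (‖W₁ - W₂‖ * ‖h₁ - h₂‖) * B ≤ (‖W₁ - W₂‖ * ‖h₁ - h₂‖) * B ^ 2 := by gcongr
  have j2 : (‖W₁ - W₂‖ * ‖r₁ - r₂‖) * B ≤ (‖W₁ - W₂‖ * ‖r₁ - r₂‖) * B ^ 2 := by gcongr
  have j3 : 0 ≤ (‖W₁ - W₂‖ * ‖r₁ - r₂‖) * B ^ 2 := by positivity
  nlinarith

lemma growth (x z D : ℝ) (M : ℝ≥0∞) (hx : 0 ≤ x) (hz : 0 ≤ z) (hD : 0 ≤ D)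
    (h1 : ENNReal.ofReal x ≤ M)
    (h2 : M + ENNReal.ofReal D ≤
      ENNReal.ofReal (1/2) * ENNReal.ofReal x + ENNReal.ofReal (1/2) * ENNReal.ofReal z) :
    2 * D ≤ z - x := by
  have h3 := (add_le_add_left h1 (ENNReal.ofReal D)).trans h2
  rw [← ENNReal.ofReal_mul (by norm_num), ← ENNReal.ofReal_mul (by norm_num),
    ← ENNReal.ofReal_add hx hD, ← ENNReal.ofReal_add (by positivity) (by positivity),
    ENNReal.ofReal_le_ofReal_iff (by positivity)] at h3
  linarith

/-- The gradient `W ↦ ∇_W ℓ₂(y, W)` is L-Lipschitz on C, uniformly in y ∈ Y. -/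
theorem grad_ell2_lipschitz {d k : ℕ}
    (φ : Vec k → ℝ≥0∞) (ϕ' : Vec d → ℝ≥0∞)
    (H : Set (Vec k)) (R : Set (Vec d)) (ν : ℝ) (hν : 0 < ν)
    (hφconv : ConvexFnENN φ) (hφproper : ∃ h, φ h ≠ ⊤) (hφclosed : LowerSemicontinuous φ)
    (hϕconv : ConvexFnENN ϕ') (hϕproper : ∃ r, ϕ' r ≠ ⊤) (hϕclosed : LowerSemicontinuous ϕ')
    (hHne : H.Nonempty) (hHconv : Convex ℝ H) (hHcomp : IsCompact H)
    (hRne : R.Nonempty) (hRconv : Convex ℝ R) (hRcomp : IsCompact R)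
    -- joint ν-strong convexity of `ℓ̃₂(y, W, ·, ·)` on `H × R`
    (hsc : ∀ (y : Vec d) (W : Mat d k), ∀ h₁ ∈ H, ∀ h₂ ∈ H, ∀ r₁ ∈ R, ∀ r₂ ∈ R,
      ∀ a b : ℝ, 0 ≤ a → 0 ≤ b → a + b = 1 →
        ell2t φ ϕ' y W (a • h₁ + b • h₂) (a • r₁ + b • r₂)
            + ENNReal.ofReal (ν / 2 * (a * b) * (‖h₁ - h₂‖ ^ 2 + ‖r₁ - r₂‖ ^ 2))
          ≤ ENNReal.ofReal a * ell2t φ ϕ' y W h₁ r₁ + ENNReal.ofReal b * ell2t φ ϕ' y W h₂ r₂)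
    -- `(hstar y W, rstar y W)` is the (unique) minimizer of `ℓ̃₂(y, W, ·, ·)` over `H × R`
    (hstar : Vec d → Mat d k → Vec k) (rstar : Vec d → Mat d k → Vec d)
    (hstar_mem : ∀ y W, hstar y W ∈ H) (rstar_mem : ∀ y W, rstar y W ∈ R)
    (hmin : ∀ (y : Vec d) (W : Mat d k), ∀ h ∈ H, ∀ r ∈ R,
        ell2t φ ϕ' y W (hstar y W) (rstar y W) ≤ ell2t φ ϕ' y W h r)
    (huniq : ∀ (y : Vec d) (W : Mat d k), ∀ h ∈ H, ∀ r ∈ R,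
        (∀ h' ∈ H, ∀ r' ∈ R, ell2t φ ϕ' y W h r ≤ ell2t φ ϕ' y W h' r') →
        h = hstar y W ∧ r = rstar y W)
    (Y : Set (Vec d)) (hYcomp : IsCompact Y)
    (C : Set (Mat d k)) (hCcomp : IsCompact C) (hCconv : Convex ℝ C) :
    ∃ L : ℝ, 0 < L ∧ ∀ y ∈ Y, ∀ W₁ ∈ C, ∀ W₂ ∈ C,
      ‖gradFormula y W₁ (hstar y W₁) (rstar y W₁)
          - gradFormula y W₂ (hstar y W₂) (rstar y W₂)‖
        ≤ L * ‖W₁ - W₂‖ := by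
  obtain ⟨BH, hBH⟩ := hHcomp.isBounded.exists_norm_le
  obtain ⟨BR, hBR⟩ := hRcomp.isBounded.exists_norm_le
  obtain ⟨BY, hBY⟩ := hYcomp.isBounded.exists_norm_le
  obtain ⟨BC, hBC⟩ := hCcomp.isBounded.exists_norm_le
  obtain ⟨B, hB, hH', hR', hY', hC'⟩ : ∃ B : ℝ, 1 ≤ B ∧ (∀ x ∈ H, ‖x‖ ≤ B) ∧
      (∀ x ∈ R, ‖x‖ ≤ B) ∧ (∀ x ∈ Y, ‖x‖ ≤ B) ∧ (∀ x ∈ C, ‖x‖ ≤ B) := by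
    refine ⟨1 + |BH| + |BR| + |BY| + |BC|, ?_, ?_, ?_, ?_, ?_⟩
    · linarith [abs_nonneg BH, abs_nonneg BR, abs_nonneg BY, abs_nonneg BC]
    · intro x hx
      linarith [hBH x hx, le_abs_self BH, abs_nonneg BR, abs_nonneg BY, abs_nonneg BC]
    · intro x hx
      linarith [hBR x hx, le_abs_self BR, abs_nonneg BH, abs_nonneg BY, abs_nonneg BC]
    · intro x hx
      linarith [hBY x hx, le_abs_self BY, abs_nonneg BR, abs_nonneg BH, abs_nonneg BC]
    · intro x hx
      linarith [hBC x hx, le_abs_self BC, abs_nonneg BR, abs_nonneg BY, abs_nonneg BH]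
  refine ⟨B ^ 2 * (1 + 64 * B ^ 2 / ν), by positivity, ?_⟩
  intro y hy W₁ hW₁ W₂ hW₂
  have hh₁ := hstar_mem y W₁
  have hh₂ := hstar_mem y W₂
  have hr₁ := rstar_mem y W₁
  have hr₂ := rstar_mem y W₂
  have hm₁ := hmin y W₁
  have hm₂ := hmin y W₂
  have hu₁ := huniq y W₁ _ hh₂ _ hr₂
  generalize hstar y W₁ = h₁ at *
  generalize hstar y W₂ = h₂ at *
  generalize rstar y W₁ = r₁ at *
  generalize rstar y W₂ = r₂ at *
  have hu := norm_nonneg (W₁ - W₂)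
  have hp := norm_nonneg (h₁ - h₂)
  have hq := norm_nonneg (r₁ - r₂)
  -- Lipschitz bound for the minimizers
  have hs : ‖h₁ - h₂‖ + ‖r₁ - r₂‖ ≤ 16 * B ^ 2 / ν * ‖W₁ - W₂‖ := by
    by_cases htop : ell2t φ ϕ' y W₁ h₁ r₁ = ⊤
    · have h0 := hu₁ (by
        intro h' hh' r' hr'
        have := hm₁ h' hh' r' hr'
        rw [htop, top_le_iff] at this
        rw [this]
        exact le_top)
      rw [h0.1, h0.2]
      simp only [sub_self, norm_zero, add_zero]
      positivity
    · have hform : ∀ (W : Mat d k) h r, φ h + ϕ' r ≠ ⊤ → ell2t φ ϕ' y W h r =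
          ENNReal.ofReal (‖y - matMulVec W h - r‖ ^ 2 / 2 + (φ h + ϕ' r).toReal) := by
        intro W h r hfin
        rw [ENNReal.ofReal_add (by positivity) ENNReal.toReal_nonneg,
          ENNReal.ofReal_toReal hfin, ell2t, add_assoc]
      have hfin : ∀ (W : Mat d k) h r, ell2t φ ϕ' y W h r ≠ ⊤ → φ h + ϕ' r ≠ ⊤ := by
        intro W h r hne
        rw [ell2t, add_assoc] at hne
        exact (ENNReal.add_ne_top.1 hne).2
      have f1 := hfin _ _ _ htop
      have f2 : φ h₂ + ϕ' r₂ ≠ ⊤ := by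
        apply hfin W₂
        refine ne_top_of_le_ne_top ?_ (hm₂ _ hh₁ _ hr₁)
        rw [hform _ _ _ f1]
        exact ENNReal.ofReal_ne_top
      have memH : (1/2 : ℝ) • h₁ + (1/2 : ℝ) • h₂ ∈ H :=
        hHconv hh₁ hh₂ (by norm_num) (by norm_num) (by norm_num)
      have memR : (1/2 : ℝ) • r₁ + (1/2 : ℝ) • r₂ ∈ R :=
        hRconv hr₁ hr₂ (by norm_num) (by norm_num) (by norm_num)
      have s1 := hsc y W₁ h₁ hh₁ h₂ hh₂ r₁ hr₁ r₂ hr₂ (1/2) (1/2)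
        (by norm_num) (by norm_num) (by norm_num)
      have s2 := hsc y W₂ h₁ hh₁ h₂ hh₂ r₁ hr₁ r₂ hr₂ (1/2) (1/2)
        (by norm_num) (by norm_num) (by norm_num)
      have t1 := hm₁ _ memH _ memR
      have t2 := hm₂ _ memH _ memR
      rw [hform _ _ _ f1] at s1 s2 t1
      rw [hform _ _ _ f2] at s1 s2 t2
      rw [add_comm (ENNReal.ofReal (1/2) * _)] at s2
      have c1 : 0 ≤ (φ h₁ + ϕ' r₁).toReal := ENNReal.toReal_nonneg
      have c2 : 0 ≤ (φ h₂ + ϕ' r₂).toReal := ENNReal.toReal_nonneg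
      have g1 := growth _ _ _ _ (by positivity) (by positivity) (by positivity) t1 s1
      have g2 := growth _ _ _ _ (by positivity) (by positivity) (by positivity) t2 s2
      have gb := g_bound B hB y W₁ W₂ h₁ h₂ r₁ r₂ (hY' _ hy) (hC' _ hW₁) (hC' _ hW₂)
        (hH' _ hh₁) (hH' _ hh₂) (hR' _ hr₁)
      have fin : ν * (‖h₁ - h₂‖ + ‖r₁ - r₂‖) ^ 2 ≤
          (16 * B ^ 2 * ‖W₁ - W₂‖) * (‖h₁ - h₂‖ + ‖r₁ - r₂‖) := by
        have : ν * (‖h₁ - h₂‖ + ‖r₁ - r₂‖) ^ 2 ≤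
            ν * (2 * (‖h₁ - h₂‖ ^ 2 + ‖r₁ - r₂‖ ^ 2)) := by
          gcongr
          nlinarith [sq_nonneg (‖h₁ - h₂‖ - ‖r₁ - r₂‖)]
        linarith
      rw [div_mul_eq_mul_div, le_div_iff₀ hν]
      rcases (add_nonneg hp hq).eq_or_lt with h0 | h0
      · rw [← h0, zero_mul]; positivity
      · refine le_of_mul_le_mul_right ?_ h0
        linarith
  have hgr : ∀ (W : Mat d k) h r, gradFormula y W h r = outerP (matMulVec W h + r - y) h := fun _ _ _ => rfl
  rw [hgr, hgr, outerP_diff]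
  have E1 : ‖(matMulVec W₁ h₁ + r₁ - y) - (matMulVec W₂ h₂ + r₂ - y)‖ ≤
      ‖W₁ - W₂‖ * B + B * ‖h₁ - h₂‖ + ‖r₁ - r₂‖ := by
    have e : (matMulVec W₁ h₁ + r₁ - y) - (matMulVec W₂ h₂ + r₂ - y) =
        matMulVec (W₁ - W₂) h₁ + matMulVec W₂ (h₁ - h₂) + (r₁ - r₂) := by
      rw [matMulVec_sub_left, matMulVec_sub_right]; abel
    rw [e]
    refine (norm_add₃_le).trans ?_
    gcongr
    · exact (norm_matMulVec_le _ _).trans (by gcongr; exact hH' _ hh₁)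
    · exact (norm_matMulVec_le _ _).trans (by gcongr; exact hC' _ hW₂)
  have E2 : ‖matMulVec W₂ h₂ + r₂ - y‖ ≤ B * B + B + B := by
    have m1 : ‖matMulVec W₂ h₂‖ ≤ B * B :=
      (norm_matMulVec_le _ _).trans (by gcongr; exacts [hC' _ hW₂, hH' _ hh₂])
    have m2 := norm_sub_le (matMulVec W₂ h₂ + r₂) y
    have m3 := norm_add_le (matMulVec W₂ h₂) r₂
    linarith [hR' _ hr₂, hY' _ hy]
  have hBB : B ≤ B ^ 2 := by nlinarith
  calc _ ≤ (‖W₁ - W₂‖ * B + B * ‖h₁ - h₂‖ + ‖r₁ - r₂‖) * B + (B * B + B + B) * ‖h₁ - h₂‖ := by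
        refine (norm_add_le _ _).trans ?_
        gcongr
        · exact (norm_outerP _ _).trans (by gcongr; exact hH' _ hh₁)
        · exact (norm_outerP _ _).trans (by gcongr)
    _ ≤ B ^ 2 * (‖W₁ - W₂‖ + 4 * (‖h₁ - h₂‖ + ‖r₁ - r₂‖)) := by
        have k1 := mul_le_mul_of_nonneg_right hBB hp
        have k2 := mul_le_mul_of_nonneg_right hBB hq
        have k3 : 0 ≤ B ^ 2 * ‖r₁ - r₂‖ := by positivity
        nlinarith
    _ ≤ B ^ 2 * (‖W₁ - W₂‖ + 4 * (16 * B ^ 2 / ν * ‖W₁ - W₂‖)) := by gcongr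
    _ = _ := by ring
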